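/- arXiv:1607.07211 — 3 statements merged into one kernel-verified Lean document; each statement's English description precedes it below -/
import Mathlib

section
/- (Orthonormality of symmetrized states, Bargmann realization.) Let ι be a type with decidable equality and i, j : Fin N → ι. In MvPolynomial ι ℂ, the full iterated partial derivative of a degree-N monomial is the constant (∂_{i_1}∘⋯∘∂_{i_N})(X_{j_1}⋯X_{j_N}) = N! · δ_{i;j}, where δ_{i;j} is the permutation-invariant Kronecker delta. -/
/-- The permutation-invariant Kronecker delta
`δ_{u;v} = (1/S!) · Σ_{σ ∈ S_S} ∏_{k} [u_k = v_{σ(k)}]`. -/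
noncomputable def permDelta {ι : Type*} [DecidableEq ι] {S : ℕ} (u v : Fin S → ι) : ℂ :=
  (S.factorial : ℂ)⁻¹ *
    ∑ σ : Equiv.Perm (Fin S), ∏ k : Fin S, if u k = v (σ k) then 1 else 0

/-- The iterated formal partial derivative `∂_{i_1} ∘ ⋯ ∘ ∂_{i_M}` in the Bargmann
realization of bosonic Fock space (annihilation operators). -/
noncomputable def pderivs {ι : Type*} [DecidableEq ι] {M : ℕ} (i : Fin M → ι)
    (p : MvPolynomial ι ℂ) : MvPolynomial ι ℂ :=
  (List.ofFn i).foldr (fun a q => MvPolynomial.pderiv a q) p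

/-! Each application of Leibniz' rule selects one factor among those not yet differentiated, so
composing `M` derivations yields a sum over the injections of `Fin M` into the set of factors,
provided all the derivatives of the factors are scalars. With as many derivations as factors the
injections are permutations and the sum is the permanent of the matrix of derivatives, here
`[i_k = j_x]`. -/

open Finset

theorem sum_embedding_fin_succ {α M : Type*} [Fintype α] [DecidableEq α] [AddCommMonoid M] {n : ℕ}
    (g : (Fin (n + 1) → α) → M) :
    ∑ e : Fin (n + 1) ↪ α, g e =
      ∑ e : Fin n ↪ α, ∑ x ∈ (univ.image e)ᶜ, g (Fin.cons x e) := by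
  rw [← (Equiv.embeddingFinSucc n α).symm.sum_comp, Fintype.sum_sigma]
  refine sum_congr rfl fun e _ => ?_
  simp only [Equiv.coe_embeddingFinSucc_symm]
  exact (sum_subtype _ (by simp) fun x => g (Fin.cons x e)).symm

section Derivation

variable {R A α : Type*} [CommSemiring R] [CommSemiring A] [Algebra R A]

theorem derivation_prod {M : Type*} [AddCommMonoid M] [Module R M] [Module A M] [DecidableEq α]
    (D : Derivation R A M) (s : Finset α) (f : α → A) :
    D (∏ x ∈ s, f x) = ∑ x ∈ s, (∏ y ∈ s.erase x, f y) • D (f x) := by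
  induction s using Finset.induction_on with
  | empty => simp
  | insert b s hb ih =>
    rw [prod_insert hb, sum_insert hb, Derivation.leibniz, ih, erase_insert hb, smul_sum, add_comm]
    congr 1
    refine sum_congr rfl fun x hx => ?_
    have hbx : b ≠ x := fun h => hb (h ▸ hx)
    rw [erase_insert_of_ne hbx, prod_insert (mt mem_of_mem_erase hb), mul_smul]

theorem foldr_derivation_prod [Fintype α] [DecidableEq α] {M : ℕ} (D : Fin M → Derivation R A A)
    (f : α → A) (c : Fin M → α → R) (h : ∀ k x, D k (f x) = algebraMap R A (c k x)) :
    (List.ofFn D).foldr (fun d a => d a) (∏ x, f x) =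
      ∑ e : Fin M ↪ α, (∏ k, c k (e k)) • ∏ x ∈ (univ.image e)ᶜ, f x := by
  induction M with
  | zero => simp
  | succ M ih =>
    rw [List.ofFn_succ, List.foldr_cons, ih _ _ fun k => h k.succ, map_sum,
      sum_embedding_fin_succ fun e => (∏ k, c k (e k)) • ∏ x ∈ (univ.image e)ᶜ, f x]
    refine sum_congr rfl fun e _ => ?_
    rw [Derivation.map_smul, derivation_prod, smul_sum]
    refine sum_congr rfl fun x _ => ?_
    have image_cons : univ.image (Fin.cons x e : Fin (M + 1) → α) = insert x (univ.image e) := by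
      ext y
      simp [Fin.exists_fin_succ, eq_comm]
    have prod_cons : ∏ k, c k ((Fin.cons x e : Fin (M + 1) → α) k) =
        (∏ k, c k.succ (e k)) * c 0 x := by
      rw [Fin.prod_univ_succ, mul_comm]
      simp only [Fin.cons_zero, Fin.cons_succ]
    rw [h, image_cons, prod_cons, compl_insert, smul_eq_mul, mul_comm (∏ y ∈ _, f y),
      ← Algebra.smul_def, smul_smul]

theorem foldr_derivation_prod_eq_permanent {N : ℕ} (D : Fin N → Derivation R A A) (f : Fin N → A)
    (c : Matrix (Fin N) (Fin N) R) (h : ∀ k x, D k (f x) = algebraMap R A (c k x)) :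
    (List.ofFn D).foldr (fun d a => d a) (∏ x, f x) = algebraMap R A c.permanent := by
  rw [foldr_derivation_prod D f c h, ← Matrix.permanent_transpose, Matrix.permanent, map_sum]
  refine Fintype.sum_equiv (Equiv.embeddingEquivOfFinite (Fin N)) _ _ fun e => ?_
  have image_univ : univ.image e = univ :=
    image_univ_of_surjective (Finite.surjective_of_injective e.injective)
  rw [image_univ, compl_univ, prod_empty, ← Algebra.algebraMap_eq_smul_one]
  rfl

end Derivation

theorem pderivs_monomial_full_general {R ι : Type*} [CommSemiring R] [DecidableEq ι] {N : ℕ}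
    (i j : Fin N → ι) :
    (List.ofFn i).foldr (fun a q => MvPolynomial.pderiv a q)
        (∏ x, MvPolynomial.X (j x) : MvPolynomial ι R) =
      MvPolynomial.C (∑ σ : Equiv.Perm (Fin N), ∏ k, if i k = j (σ k) then 1 else 0) := by
  let c : Matrix (Fin N) (Fin N) R := Matrix.of fun k x => if i k = j x then 1 else 0
  have pderiv_X (k x : Fin N) : MvPolynomial.pderiv (i k) (MvPolynomial.X (j x)) =
      algebraMap R (MvPolynomial ι R) (c k x) := by
    simp only [MvPolynomial.pderiv_X, Pi.single_apply, c, Matrix.of_apply, eq_comm (a := i k),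
      apply_ite (algebraMap R (MvPolynomial ι R)), map_one, map_zero]
  have permanent_c : c.permanent =
      ∑ σ : Equiv.Perm (Fin N), ∏ k, if i k = j (σ k) then 1 else 0 :=
    (Matrix.permanent_transpose c).symm
  rw [← permanent_c, ← MvPolynomial.algebraMap_eq,
    ← foldr_derivation_prod_eq_permanent (fun k => MvPolynomial.pderiv (i k)) _ c pderiv_X,
    List.ofFn_comp' i MvPolynomial.pderiv, List.foldr_map]

/-- Orthonormality of symmetrized states (Bargmann realization):
`(∂_{i_1}∘⋯∘∂_{i_N})(X_{j_1}⋯X_{j_N}) = N! · δ_{i;j}` as a constant polynomial. -/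
theorem pderivs_monomial_full {ι : Type*} [DecidableEq ι] {N : ℕ} (i j : Fin N → ι) :
    pderivs i (∏ x : Fin N, MvPolynomial.X (j x)) =
      MvPolynomial.C ((N.factorial : ℂ) * permDelta i j) := by
  rw [permDelta, mul_inv_cancel_left₀ (Nat.cast_ne_zero.mpr N.factorial_ne_zero)]
  exact pderivs_monomial_full_general i j
end

section
/- (Lemma 2, Bargmann realization.) Let ι be a type with decidable equality, M ≤ N natural numbers, i, j : Fin N → ι and k, l : Fin M → ι. In MvPolynomial ι ℂ, the full contraction (∂_{i_1}∘⋯∘∂_{i_N})( X_{k_1}⋯X_{k_M} · (∂_{l_1}∘⋯∘∂_{l_M})(X_{j_1}⋯X_{j_N}) ) equals the constant (N−M)! · (M!)² · Σ_{α,β} δ_{k; i∘α} · δ_{l; j∘β} · δ_{i∘α̂; j∘β̂}, where the sum runs over all pairs of strictly monotone maps α, β : Fin M → Fin N, α̂, β̂ : Fin (N−M) → Fin N denote the strictly monotone enumerations of the complements of the ranges of α and β respectively, and δ denotes the permutation-invariant Kronecker delta (of M-tuples for the first two factors and of (N−M)-tuples for the third). -/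
/-!
Multiplication by `X a` and `∂_a` are mutually adjoint for the Fischer form
`⟪p, q⟫ = ∑ d, d! · coeff d p · coeff d q`, and `∂_{i_1}⋯∂_{i_N}` acts on homogeneous
polynomials of degree `N` as the pairing with `X_{i_1}⋯X_{i_N}`. The matrix element is therefore
`⟪∂_{k_1}⋯∂_{k_M} X_{i_1}⋯X_{i_N}, ∂_{l_1}⋯∂_{l_M} X_{j_1}⋯X_{j_N}⟫`. By the Leibniz rule each
entry of this pairing is a sum over the ways of choosing which `M` of the `N` factors are
differentiated, and the undifferentiated factors pair to `(N - M)!` times a Kronecker delta.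
-/

section GeneralLemmas

theorem derivation_finset_prod {R A E κ : Type*} [CommSemiring R] [CommSemiring A] [Algebra R A]
    [AddCommMonoid E] [Module R E] [Module A E] [DecidableEq κ] (D : Derivation R A E)
    (s : Finset κ) (f : κ → A) :
    D (∏ y ∈ s, f y) = ∑ z ∈ s, (∏ y ∈ s.erase z, f y) • D (f z) := by
  induction s using Finset.induction_on with
  | empty => simp
  | insert b s hb ih =>
    rw [Finset.prod_insert hb, Finset.sum_insert hb, Derivation.leibniz, ih,
      Finset.erase_insert hb, Finset.smul_sum, add_comm]
    congr 1
    refine Finset.sum_congr rfl fun z hz => ?_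
    have hbz : b ≠ z := fun h => hb (h ▸ hz)
    rw [Finset.erase_insert_of_ne hbz,
      Finset.prod_insert fun h => hb (Finset.mem_of_mem_erase h), smul_smul]

theorem prod_comp_orderEmbOfFin {κ A : Type*} [LinearOrder κ] [CommMonoid A] {n : ℕ}
    (s : Finset κ) (hs : s.card = n) (f : κ → A) :
    ∏ x : Fin n, f (s.orderEmbOfFin hs x) = ∏ y ∈ s, f y :=
  calc ∏ x, f (s.orderEmbOfFin hs x)
      = ∏ y ∈ Finset.univ.map (s.orderEmbOfFin hs).toEmbedding, f y :=
        (Finset.prod_map _ _ f).symm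
    _ = ∏ y ∈ s, f y := by rw [Finset.map_orderEmbOfFin_univ]

theorem map_perm_trans_orderEmbOfFin_univ {κ : Type*} [LinearOrder κ] {n : ℕ} (s : Finset κ)
    (hs : s.card = n) (σ : Equiv.Perm (Fin n)) :
    Finset.univ.map (σ.toEmbedding.trans (s.orderEmbOfFin hs).toEmbedding) = s := by
  rw [← Finset.map_map, Finset.univ_map_equiv_to_embedding, Finset.map_orderEmbOfFin_univ]

theorem bijective_perm_trans_orderEmbOfFin (κ : Type*) [LinearOrder κ] (n : ℕ) :
    Function.Bijective fun q : {s : Finset κ // s.card = n} × Equiv.Perm (Fin n) =>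
      q.2.toEmbedding.trans (q.1.1.orderEmbOfFin q.1.2).toEmbedding := by
  constructor
  · rintro ⟨⟨s, hs⟩, σ⟩ ⟨⟨t, ht⟩, τ⟩ hst
    obtain rfl : s = t := by
      rw [← map_perm_trans_orderEmbOfFin_univ s hs σ, ← map_perm_trans_orderEmbOfFin_univ t ht τ]
      exact congrArg (Finset.univ.map ·) hst
    obtain rfl : σ = τ :=
      Equiv.ext fun x => (s.orderEmbOfFin hs).injective (DFunLike.congr_fun hst x)
    rfl
  · intro f
    have hs : (Finset.univ.map f).card = n := by simp
    let e := (Finset.univ.map f).orderIsoOfFin hs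
    let g : Fin n → Fin n := fun x => e.symm ⟨f x, Finset.mem_map_of_mem f (Finset.mem_univ x)⟩
    have hg : Function.Injective g := fun x y hxy =>
      f.injective (congrArg Subtype.val (e.symm.injective hxy))
    refine ⟨⟨⟨_, hs⟩, Equiv.ofBijective g (Finite.injective_iff_bijective.mp hg)⟩, ?_⟩
    ext x
    exact congrArg Subtype.val (e.apply_symm_apply _)

theorem sum_embedding_eq_sum_subset_sum_perm {κ A : Type*} [LinearOrder κ] [Fintype κ]
    [AddCommMonoid A] {n : ℕ} (F : (Fin n ↪ κ) → A) :
    ∑ f, F f = ∑ s : {s : Finset κ // s.card = n}, ∑ σ : Equiv.Perm (Fin n),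
      F (σ.toEmbedding.trans (s.1.orderEmbOfFin s.2).toEmbedding) := by
  rw [← Fintype.sum_prod_type']
  exact ((bijective_perm_trans_orderEmbOfFin κ n).sum_comp F).symm

end GeneralLemmas

section MvPolynomialLemmas

open MvPolynomial

variable {ι R : Type*} [CommSemiring R]

theorem isHomogeneous_prod_X {κ : Type*} (s : Finset κ) (h : κ → ι) :
    (∏ y ∈ s, X (h y) : MvPolynomial ι R).IsHomogeneous s.card := by
  simpa using IsHomogeneous.prod s _ _ fun y _ => isHomogeneous_X R (h y)

theorem pderiv_prod_X {κ : Type*} [DecidableEq ι] [DecidableEq κ] (a : ι) (h : κ → ι)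
    (s : Finset κ) :
    pderiv a (∏ y ∈ s, (X (h y) : MvPolynomial ι R)) =
      ∑ z ∈ s, (if a = h z then 1 else 0 : R) • ∏ y ∈ s.erase z, X (h y) := by
  rw [derivation_finset_prod]
  refine Finset.sum_congr rfl fun z _ => ?_
  rw [pderiv_X, Pi.single_apply]
  split_ifs <;> simp_all

end MvPolynomialLemmas

section FischerForm

open MvPolynomial Finsupp
open scoped Nat

variable {ι R : Type*} [CommSemiring R]

/-- The Fischer form `⟪p, q⟫ = ∑ d, d! · coeff d p · coeff d q` on polynomials, where `d!` is the
product of the factorials of the exponents in `d`. It is the bilinear form underlying the inner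
product of Bargmann–Fock space, with no conjugation on the coefficients. -/
noncomputable def fischerForm (ι R : Type*) [CommSemiring R] :
    LinearMap.BilinForm R (MvPolynomial ι R) :=
  (basisMonomials ι R).constr R fun d => (d.prod fun _ n => (n ! : R)) • lcoeff R d

theorem fischerForm_monomial_one_left (d : ι →₀ ℕ) (q : MvPolynomial ι R) :
    fischerForm ι R (monomial d 1) q = (d.prod fun _ n => (n ! : R)) * coeff d q := by
  have h := (basisMonomials ι R).constr_basis R
    (fun d => (d.prod fun _ n => (n ! : R)) • lcoeff R d) d
  exact LinearMap.congr_fun h q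

theorem fischerForm_isSymm : (fischerForm ι R).IsSymm := by
  classical
  refine LinearMap.BilinForm.isSymm_iff_basis (basisMonomials ι R) |>.mpr fun d e => ?_
  simp only [coe_basisMonomials, fischerForm_monomial_one_left, coeff_monomial]
  split_ifs <;> simp_all

theorem fischerForm_one_left (q : MvPolynomial ι R) :
    fischerForm ι R 1 q = constantCoeff q := by
  simpa [constantCoeff_eq] using fischerForm_monomial_one_left 0 q

theorem prod_factorial_add_single (d : ι →₀ ℕ) (a : ι) :
    ((d + single a 1).prod fun _ n => (n ! : R)) =
      (d a + 1 : R) * d.prod fun _ n => (n ! : R) := by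
  classical
  rw [← mul_prod_erase' _ a _ (by simp), ← mul_prod_erase' d a _ (by simp)]
  simp [Nat.factorial_succ, mul_assoc]

theorem fischerForm_X_mul_left (a : ι) (p q : MvPolynomial ι R) :
    fischerForm ι R (X a * p) q = fischerForm ι R p (pderiv a q) := by
  suffices h : fischerForm ι R ∘ₗ LinearMap.mulLeft R (X a) =
      (fischerForm ι R).compl₂ (pderiv a).toLinearMap from LinearMap.congr_fun₂ h p q
  refine (basisMonomials ι R).ext fun d => LinearMap.ext fun q => ?_
  have hmul : (X a * monomial d 1 : MvPolynomial ι R) = monomial (d + single a 1) 1 := by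
    rw [X, monomial_mul, one_mul, add_comm]
  simp only [coe_basisMonomials, LinearMap.comp_apply, LinearMap.mulLeft_apply, hmul,
    LinearMap.compl₂_apply, Derivation.coeFn_coe,
    fischerForm_monomial_one_left, coeff_pderiv, prod_factorial_add_single]
  ring

end FischerForm

section Pderivs

open MvPolynomial

variable {ι : Type*} [DecidableEq ι] {M : ℕ}

theorem pderivs_fin_zero (i : Fin 0 → ι) (p : MvPolynomial ι ℂ) : pderivs i p = p := by
  simp [pderivs]

theorem pderivs_fin_succ (i : Fin (M + 1) → ι) (p : MvPolynomial ι ℂ) :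
    pderivs i p = pderiv (i 0) (pderivs (fun x => i x.succ) p) := by
  simp [pderivs, List.ofFn_succ]

theorem isHomogeneous_pderivs {n : ℕ} (i : Fin M → ι) {p : MvPolynomial ι ℂ}
    (hp : p.IsHomogeneous n) : (pderivs i p).IsHomogeneous (n - M) := by
  induction M with
  | zero => simpa only [pderivs_fin_zero, Nat.sub_zero] using hp
  | succ M ih => simpa only [pderivs_fin_succ, Nat.sub_add_eq] using (ih _).pderiv

theorem fischerForm_prod_X_mul_left (i : Fin M → ι) (p q : MvPolynomial ι ℂ) :
    fischerForm ι ℂ ((∏ x, X (i x)) * p) q = fischerForm ι ℂ p (pderivs i q) := by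
  induction M generalizing p with
  | zero => simp [pderivs_fin_zero]
  | succ M ih =>
    rw [Fin.prod_univ_succ, mul_assoc, mul_left_comm, ih, fischerForm_X_mul_left, pderivs_fin_succ]

theorem fischerForm_prod_X_mul_right (i : Fin M → ι) (p q : MvPolynomial ι ℂ) :
    fischerForm ι ℂ p ((∏ x, X (i x)) * q) = fischerForm ι ℂ (pderivs i p) q := by
  rw [fischerForm_isSymm.eq, fischerForm_prod_X_mul_left, fischerForm_isSymm.eq]

theorem fischerForm_prod_X_left (i : Fin M → ι) (q : MvPolynomial ι ℂ) :
    fischerForm ι ℂ (∏ x, X (i x)) q = constantCoeff (pderivs i q) := by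
  rw [← mul_one (∏ x, X (i x)), fischerForm_prod_X_mul_left, fischerForm_one_left]

theorem pderivs_eq_C_fischerForm_of_isHomogeneous (i : Fin M → ι) {p : MvPolynomial ι ℂ}
    (hp : p.IsHomogeneous M) :
    pderivs i p = C (fischerForm ι ℂ (∏ x, X (i x)) p) := by
  have hconst : (pderivs i p).totalDegree = 0 :=
    (totalDegree_zero_iff_isHomogeneous ι).mpr (by simpa using isHomogeneous_pderivs i hp)
  rw [fischerForm_prod_X_left]
  exact totalDegree_eq_zero_iff_eq_C.mp hconst

theorem pderivs_prod_X_eq_sum_embedding {κ : Type*} [DecidableEq κ] [Fintype κ]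
    (i : Fin M → ι) (h : κ → ι) :
    pderivs i (∏ y, X (h y)) =
      ∑ f : Fin M ↪ κ, (∏ x, if i x = h (f x) then 1 else 0 : ℂ) •
        ∏ y ∈ (Finset.univ.map f)ᶜ, X (h y) := by
  induction M with
  | zero => simp [pderivs_fin_zero]
  | succ M ih =>
    rw [pderivs_fin_succ, ih, map_sum, ← (Equiv.embeddingFinSucc M κ).symm.sum_comp,
      Fintype.sum_sigma]
    refine Finset.sum_congr rfl fun f _ => ?_
    rw [Derivation.map_smul, pderiv_prod_X, Finset.smul_sum,
      Finset.sum_subtype (p := fun z => z ∉ Set.range f) _ (by simp)]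
    refine Finset.sum_congr rfl fun z _ => ?_
    have hcompl : (Finset.univ.map f)ᶜ.erase z.1 =
        (Finset.univ.map ((Equiv.embeddingFinSucc M κ).symm ⟨f, z⟩))ᶜ := by
      ext y
      simp [Fin.exists_fin_succ, eq_comm]
    rw [hcompl, smul_smul, Fin.prod_univ_succ, mul_comm]
    simp only [Equiv.coe_embeddingFinSucc_symm, Fin.cons_zero, Fin.cons_succ]

theorem factorial_mul_permDelta (u v : Fin M → ι) :
    (M.factorial : ℂ) * permDelta u v =
      ∑ σ : Equiv.Perm (Fin M), ∏ x, if u x = v (σ x) then 1 else 0 :=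
  mul_inv_cancel_left₀ (mod_cast M.factorial_ne_zero) _

theorem pderivs_prod_X_eq_sum_subset {κ : Type*} [LinearOrder κ] [Fintype κ]
    (i : Fin M → ι) (h : κ → ι) :
    pderivs i (∏ y, X (h y)) =
      ∑ s : {s : Finset κ // s.card = M},
        (M.factorial * permDelta i (fun x => h (s.1.orderEmbOfFin s.2 x)) : ℂ) •
          ∏ y ∈ s.1ᶜ, X (h y) := by
  rw [pderivs_prod_X_eq_sum_embedding, sum_embedding_eq_sum_subset_sum_perm]
  refine Finset.sum_congr rfl fun s _ => ?_
  simp only [map_perm_trans_orderEmbOfFin_univ]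
  rw [← Finset.sum_smul, factorial_mul_permDelta]
  rfl

theorem fischerForm_prod_X_prod_X (u v : Fin M → ι) :
    fischerForm ι ℂ (∏ x, X (u x)) (∏ x, X (v x)) = M.factorial * permDelta u v := by
  rw [fischerForm_prod_X_left, pderivs_prod_X_eq_sum_embedding, factorial_mul_permDelta,
    ← (Equiv.embeddingEquivOfFinite (Fin M)).symm.sum_comp]
  simp

end Pderivs

/-- Lemma 2 (Bargmann realization): for `M ≤ N`,
`(∂_{i_1}∘⋯∘∂_{i_N})(X_{k_1}⋯X_{k_M}·(∂_{l_1}∘⋯∘∂_{l_M})(X_{j_1}⋯X_{j_N}))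
  = (N−M)!·(M!)² · Σ_{α,β} δ_{k;i∘α} δ_{l;j∘β} δ_{i∘α̂;j∘β̂}`,
where the sums run over all `M`-element subsets `s, t` of `Fin N` (equivalently, over
the strictly monotone maps `α = s.orderEmbOfFin`, `β = t.orderEmbOfFin : Fin M → Fin N`),
and `α̂, β̂ : Fin (N−M) → Fin N` are the strictly monotone enumerations of the
complements of their ranges. -/
theorem pderivs_creation_annihilation_matrix_element {ι : Type*} [DecidableEq ι]
    {M N : ℕ} (hMN : M ≤ N) (i j : Fin N → ι) (k l : Fin M → ι) :
    pderivs i ((∏ x : Fin M, MvPolynomial.X (k x)) *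
        pderivs l (∏ x : Fin N, MvPolynomial.X (j x))) =
      MvPolynomial.C ((((N - M).factorial : ℂ) * (M.factorial : ℂ) ^ 2) *
        ∑ s : {s : Finset (Fin N) // s.card = M},
          ∑ t : {t : Finset (Fin N) // t.card = M},
            permDelta k (fun x => i (s.1.orderEmbOfFin s.2 x)) *
              permDelta l (fun x => j (t.1.orderEmbOfFin t.2 x)) *
                permDelta
                  (fun x => i ((s.1ᶜ).orderEmbOfFin
                    (by simp [Finset.card_compl, s.2] : (s.1ᶜ).card = N - M) x))
                  (fun x => j ((t.1ᶜ).orderEmbOfFin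
                    (by simp [Finset.card_compl, t.2] : (t.1ᶜ).card = N - M) x))) := by
  have hdeg : ((∏ x, MvPolynomial.X (k x)) *
      pderivs l (∏ x, MvPolynomial.X (j x))).IsHomogeneous N := by
    simpa [Nat.add_sub_cancel' hMN] using (isHomogeneous_prod_X Finset.univ k).mul
      (isHomogeneous_pderivs l (isHomogeneous_prod_X Finset.univ j))
  have hcard (s : {s : Finset (Fin N) // s.card = M}) : (s.1ᶜ).card = N - M := by
    simp [Finset.card_compl, s.2]
  rw [pderivs_eq_C_fischerForm_of_isHomogeneous i hdeg, fischerForm_prod_X_mul_right,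
    pderivs_prod_X_eq_sum_subset, pderivs_prod_X_eq_sum_subset]
  refine congrArg MvPolynomial.C ?_
  simp only [map_sum, map_smul, LinearMap.sum_apply, LinearMap.smul_apply, smul_eq_mul,
    ← prod_comp_orderEmbOfFin _ (hcard _), fischerForm_prod_X_prod_X, Finset.mul_sum]
  rw [Finset.sum_comm]
  refine Finset.sum_congr rfl fun s _ => Finset.sum_congr rfl fun t _ => ?_
  ring
end

section
/- (Trace reduction identity.) Let ι be a finite type with decidable equality, M ≤ N natural numbers, n, m : Fin M → ι, and let F : (Fin N → ι) → (Fin N → ι) → ℂ be permutation-invariant in each argument separately, i.e. F(u∘σ, v∘τ) = F(u, v) for all permutations σ, τ of {1,…,N}. Then Σ_{i : Fin N → ι} Σ_{α} ( Σ_{σ ∈ S_M} ∏_{k=1}^{M} [i(α_k) = n_{σ(k)}] ) · F(i[α ← m], i) = (N!/(N−M)!) · Σ_{r : Fin (N−M) → ι} F(m ⌢ r, n ⌢ r), where the sum over α runs over all strictly monotone maps α : Fin M → Fin N, i[α ← m] denotes the tuple obtained from i by replacing its entry at position α_k by m_k for each k = 1,…,M, m ⌢ r : Fin N → ι denotes the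 concatenation of the M-tuple m with the (N−M)-tuple r (Fin.append), and [P] equals 1 if P holds and 0 otherwise. -/
/-!
Fix an `M`-element set of positions `s` and a permutation `σ`. The product of Kronecker deltas
forces the entries of `i` on `s` to be `n ∘ σ`, so only the entries `r` off `s` remain to be summed.
Permuting the positions of each argument of `F` separately moves the entries on `s` to the front
and undoes `σ`, which turns the summand into `F (m ⌢ r) (n ⌢ r)` whatever `s` and `σ` are. The
prefactor counts the pairs `(s, σ)`: there are `N.choose M * M ! = N ! / (N - M)!` of them.
-/

open Function

section SumDecomposition

variable {α β κ ι A : Type*}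

lemma extend_inl_sumElim (e : α ⊕ β ≃ κ) (m a : α → ι) (r : β → ι) :
    extend (e ∘ Sum.inl) m (Sum.elim a r ∘ e.symm) = Sum.elim m r ∘ e.symm := by
  ext l
  obtain ⟨x | y, rfl⟩ := e.surjective l
  · simpa using (e.injective.comp Sum.inl_injective).extend_apply m _ x
  · rw [extend_apply' _ _ _ (by simp)]
    simp

lemma apply_sumElim_comp_symm_eq_of_perm_invariant {F : (κ → ι) → (κ → ι) → A}
    (hF : ∀ (u v : κ → ι) (σ τ : Equiv.Perm κ), F (u ∘ σ) (v ∘ τ) = F u v)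
    (e e' : α ⊕ β ≃ κ) (σ τ : Equiv.Perm α) (m n : α → ι) (r : β → ι) :
    F (Sum.elim (m ∘ σ) r ∘ e.symm) (Sum.elim (n ∘ τ) r ∘ e.symm) =
      F (Sum.elim m r ∘ e'.symm) (Sum.elim n r ∘ e'.symm) := by
  have relabel (a : α → ι) (π : Equiv.Perm α) :
      Sum.elim (a ∘ π) r ∘ e.symm =
        (Sum.elim a r ∘ e'.symm) ∘ ((e.symm.trans (π.sumCongr (.refl β))).trans e') := by
    ext l
    rcases h : e.symm l with x | y <;> simp [h]
  rw [relabel m σ, relabel n τ, hF]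

variable [Fintype α] [Fintype β] [DecidableEq β] [Fintype κ] [DecidableEq κ] [Fintype ι]
  [DecidableEq ι] [AddCommMonoid A]

lemma sum_ite_comp_inl_eq (e : α ⊕ β ≃ κ) (a : α → ι) (g : (κ → ι) → A) :
    ∑ i : κ → ι, (if i ∘ e ∘ Sum.inl = a then g i else 0) =
      ∑ r : β → ι, g (Sum.elim a r ∘ e.symm) := by
  classical
  let split : (α → ι) × (β → ι) ≃ (κ → ι) :=
    (Equiv.sumArrowEquivProdArrow α β ι).symm.trans (e.arrowCongr (.refl ι))
  have elim_comp_inl (b : α → ι) (r : β → ι) :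
      (Sum.elim b r ∘ e.symm) ∘ e ∘ Sum.inl = b := by
    ext x
    simp
  rw [← split.sum_comp, Fintype.sum_prod_type_right]
  refine Finset.sum_congr rfl fun r _ ↦ ?_
  have split_apply (b : α → ι) : split (b, r) = Sum.elim b r ∘ e.symm := rfl
  simp only [split_apply, elim_comp_inl, Finset.sum_ite_eq', Finset.mem_univ, if_true]

lemma sum_ite_extend_eq_sum_sumElim {F : (κ → ι) → (κ → ι) → A}
    (hF : ∀ (u v : κ → ι) (σ τ : Equiv.Perm κ), F (u ∘ σ) (v ∘ τ) = F u v)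
    (e e' : α ⊕ β ≃ κ) (σ : Equiv.Perm α) (m n : α → ι) :
    ∑ i : κ → ι, (if i ∘ e ∘ Sum.inl = n ∘ σ then F (extend (e ∘ Sum.inl) m i) i else 0) =
      ∑ r : β → ι, F (Sum.elim m r ∘ e'.symm) (Sum.elim n r ∘ e'.symm) := by
  simp only [sum_ite_comp_inl_eq e (n ∘ σ) fun i ↦ F (extend (e ∘ Sum.inl) m i) i,
    extend_inl_sumElim]
  exact Finset.sum_congr rfl fun r _ ↦
    apply_sumElim_comp_symm_eq_of_perm_invariant hF e e' 1 σ m n r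

end SumDecomposition

lemma fin_append_comp_cast {ι : Type*} {M K N : ℕ} (h : N = M + K) (a : Fin M → ι)
    (r : Fin K → ι) :
    (fun l ↦ Fin.append a r (Fin.cast h l)) =
      Sum.elim a r ∘ (finSumFinEquiv.trans (finCongr h.symm)).symm := by
  subst h
  ext l
  obtain ⟨x | y, rfl⟩ := finSumFinEquiv.surjective l <;> simp

lemma dite_mem_orderIsoOfFin_symm_eq_extend {κ ι : Type*} [LinearOrder κ] {M : ℕ}
    (s : Finset κ) (hs : s.card = M) (m : Fin M → ι) (i : κ → ι) :
    (fun l ↦ if hl : l ∈ s then m ((s.orderIsoOfFin hs).symm ⟨l, hl⟩) else i l) =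
      extend (s.orderEmbOfFin hs) m i := by
  ext l
  split_ifs with hl
  · obtain ⟨x, hx⟩ := (s.orderIsoOfFin hs).surjective ⟨l, hl⟩
    obtain rfl : s.orderEmbOfFin hs x = l := congrArg Subtype.val hx
    rw [← hx, OrderIso.symm_apply_apply, (s.orderEmbOfFin hs).injective.extend_apply]
  · rw [extend_apply']
    rintro ⟨x, rfl⟩
    exact hl (s.orderEmbOfFin_mem hs x)

lemma prod_ite_apply_eq_smul {α ι R A : Type*} [Fintype α] [DecidableEq ι] [CommSemiring R]
    [AddCommMonoid A] [Module R A] (u v : α → ι) (a : A) :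
    (∏ x, if u x = v x then (1 : R) else 0) • a = if u = v then a else 0 := by
  simp only [Fintype.prod_boole, ite_smul, one_smul, zero_smul, funext_iff]

lemma card_finset_len_mul_card_perm (κ : Type*) [Fintype κ] (M : ℕ) :
    Fintype.card {s : Finset κ // s.card = M} * Fintype.card (Equiv.Perm (Fin M)) =
      (Fintype.card κ).descFactorial M := by
  rw [Fintype.card_finset_len, Fintype.card_perm, Fintype.card_fin,
    Nat.descFactorial_eq_factorial_mul_choose, mul_comm]

lemma cast_descFactorial_eq_div {K : Type*} [DivisionSemiring K] [CharZero K] {M N : ℕ}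
    (hMN : M ≤ N) :
    (N.descFactorial M : K) = (N.factorial : K) / ((N - M).factorial : K) := by
  rw [Nat.descFactorial_eq_div hMN,
    Nat.cast_div_charZero (Nat.factorial_dvd_factorial (Nat.sub_le N M))]

section TraceReduction

variable {ι R A : Type*} [Fintype ι] [DecidableEq ι] [CommSemiring R] [AddCommMonoid A]
  [Module R A] {M N : ℕ}

lemma sum_prod_ite_smul_eq_sum_append (hMN : M ≤ N) (n m : Fin M → ι)
    {F : (Fin N → ι) → (Fin N → ι) → A}
    (hF : ∀ (u v : Fin N → ι) (σ τ : Equiv.Perm (Fin N)), F (u ∘ σ) (v ∘ τ) = F u v)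
    (s : Finset (Fin N)) (hs : s.card = M) (σ : Equiv.Perm (Fin M)) :
    ∑ i : Fin N → ι,
        (∏ x : Fin M, if i (s.orderEmbOfFin hs x) = n (σ x) then (1 : R) else 0) •
          F (fun l ↦ if hl : l ∈ s then m ((s.orderIsoOfFin hs).symm ⟨l, hl⟩) else i l) i =
      ∑ r : Fin (N - M) → ι,
        F (fun l ↦ Fin.append m r (Fin.cast (Nat.add_sub_of_le hMN).symm l))
          (fun l ↦ Fin.append n r (Fin.cast (Nat.add_sub_of_le hMN).symm l)) := by
  have hsc : sᶜ.card = N - M := by rw [Finset.card_compl, hs, Fintype.card_fin]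
  simp only [dite_mem_orderIsoOfFin_symm_eq_extend, fin_append_comp_cast]
  rw [← sum_ite_extend_eq_sum_sumElim hF (finSumEquivOfFinset hs hsc) _ σ m n]
  exact Finset.sum_congr rfl fun i _ ↦
    prod_ite_apply_eq_smul (i ∘ s.orderEmbOfFin hs) (n ∘ σ) (F (extend (s.orderEmbOfFin hs) m i) i)

theorem trace_reduction_identity_general (hMN : M ≤ N) (n m : Fin M → ι)
    (F : (Fin N → ι) → (Fin N → ι) → A)
    (hF : ∀ (u v : Fin N → ι) (σ τ : Equiv.Perm (Fin N)), F (u ∘ σ) (v ∘ τ) = F u v) :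
    ∑ i : Fin N → ι, ∑ s : {s : Finset (Fin N) // s.card = M},
        (∑ σ : Equiv.Perm (Fin M),
            ∏ x : Fin M, if i (s.1.orderEmbOfFin s.2 x) = n (σ x) then (1 : R) else 0) •
          F (fun l ↦ if hl : l ∈ s.1 then m ((s.1.orderIsoOfFin s.2).symm ⟨l, hl⟩) else i l)
            i =
      N.descFactorial M •
        ∑ r : Fin (N - M) → ι,
          F (fun l ↦ Fin.append m r (Fin.cast (Nat.add_sub_of_le hMN).symm l))
            (fun l ↦ Fin.append n r (Fin.cast (Nat.add_sub_of_le hMN).symm l)) := by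
  simp only [Finset.sum_smul]
  rw [Finset.sum_comm]
  simp only [Finset.sum_comm (s := (Finset.univ : Finset (Fin N → ι))),
    sum_prod_ite_smul_eq_sum_append hMN n m hF]
  simp only [Finset.sum_const, smul_smul, Finset.card_univ, card_finset_len_mul_card_perm,
    Fintype.card_fin]

end TraceReduction

/-- Trace reduction identity: for `F` permutation-invariant in each of its two
`N`-tuple arguments, summing over all tuples `i` and all strictly monotone maps
`α : Fin M → Fin N` (realized as `M`-element subsets `s` of `Fin N` with their
monotone enumeration `s.orderEmbOfFin`) gives
`Σ_i Σ_α (Σ_{σ ∈ S_M} ∏_k [i(α_k) = n_{σ(k)}]) · F(i[α ← m], i)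
  = (N!/(N−M)!) · Σ_r F(m ⌢ r, n ⌢ r)`. -/
theorem trace_reduction_identity {ι : Type*} [Fintype ι] [DecidableEq ι]
    {M N : ℕ} (hMN : M ≤ N) (n m : Fin M → ι)
    (F : (Fin N → ι) → (Fin N → ι) → ℂ)
    (hF : ∀ (u v : Fin N → ι) (σ τ : Equiv.Perm (Fin N)), F (u ∘ σ) (v ∘ τ) = F u v) :
    ∑ i : Fin N → ι, ∑ s : {s : Finset (Fin N) // s.card = M},
        (∑ σ : Equiv.Perm (Fin M),
            ∏ x : Fin M, if i (s.1.orderEmbOfFin s.2 x) = n (σ x) then (1 : ℂ) else 0) *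
          F (fun l => if hl : l ∈ s.1 then m ((s.1.orderIsoOfFin s.2).symm ⟨l, hl⟩) else i l)
            i =
      ((N.factorial : ℂ) / ((N - M).factorial : ℂ)) *
        ∑ r : Fin (N - M) → ι,
          F (fun l => Fin.append m r (Fin.cast (by omega) l))
            (fun l => Fin.append n r (Fin.cast (by omega) l)) := by
  rw [← cast_descFactorial_eq_div hMN, ← nsmul_eq_mul]
  exact trace_reduction_identity_general (R := ℂ) hMN n m F hF
end
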